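/- Every semigroup which is a disjoint union of finitely many copies of the free monogenic semigroup is residually finite. -/

import Mathlib

/-- `spow a n` is the `n`-th power of `a` in a semigroup, for `n ≥ 1`
(with the junk value `a` at `n = 0`). -/
def spow {S : Type*} [Semigroup S] (a : S) : ℕ → S
  | 0 => a
  | 1 => a
  | (n + 2) => spow a (n + 1) * a

/-- The subsemigroup (as a set) generated by `a`: all positive powers of `a`. -/
def Nblock {S : Type*} [Semigroup S] (a : S) : Set S :=
  {x | ∃ i : ℕ, 1 ≤ i ∧ x = spow a i}

/-- A semigroup is residually finite if any two distinct elements are separated by a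
homomorphism into some finite semigroup. -/
def ResiduallyFiniteSemigroup (S : Type*) [Semigroup S] : Prop :=
  ∀ s t : S, s ≠ t →
    ∃ (T : Type) (iT : Semigroup T) (_ : Finite T)
      (φ : @MulHom S T Semigroup.toMul iT.toMul),
        φ.toFun s ≠ φ.toFun t

/-!
Adjoin an identity to `S`, so that every element is a power `c ^ e` of a generator. The key fact is
that `x * c ^ q = c ^ q'` forces `q ≤ q'`: otherwise some `β ≠ 1` satisfies `x * β * β = β`, and
among the elements `β ^ j * x ^ j` two lie in the same block, which is impossible because
`(β ^ i * x ^ i) * (β ^ j * x ^ j) = β ^ j * x ^ j` for `i < j`. Consequently, if `z * y` lies in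
the same block `⟨c⟩` as `y`, then `z * y = y * c ^ s` for some `s`.

Fix `z` and call `y` recurrent if some `z ^ r * y` with `r ≠ 0` lies in the block of `y`. A walk
`k ↦ z ^ k * x` has at most one non-recurrent step in each block, hence finitely many in all. How
long it takes until every step is recurrent is bounded uniformly in `x`: within `|A|` steps the walk
visits some block `⟨d⟩` twice, and from then on it only visits elements `z ^ s * d ^ l` with
`s < |A|`, so its recurrence follows from that of the finitely many walks `l ↦ z ^ s * d ^ l` under
right multiplication by `d`.

Some power `z ^ n` satisfies `z ^ n * y = y * c ^ s`, with `c` the generator of the block of `y`,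
for all recurrent `y` at once. Hence, for each modulus `N`, the function sending `x` to the block of
`z ^ k * x` and its exponent modulo `N` is eventually periodic in `k`. Letting `z` run through the
generators, there are only finitely many such functions; the action of the monoid on them factors
through a finite quotient, which separates the elements of exponent less than `N`.
-/

open Filter

theorem exists_lt_le_card_map_eq {A : Type*} [Finite A] (f : ℕ → A) :
    ∃ i j, i < j ∧ j ≤ Nat.card A ∧ f i = f j := by
  have := Fintype.ofFinite A
  obtain ⟨i, j, hij, hf⟩ := Fintype.exists_ne_map_eq_of_card_lt
    (fun i : Fin (Nat.card A + 1) => f i) (by simp)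
  rcases lt_or_gt_of_ne hij with h | h
  · exact ⟨i, j, h, j.is_le, hf⟩
  · exact ⟨j, i, h, i.is_le, hf.symm⟩

theorem finite_range_of_eventually_periodic {B : Type*} {f : ℕ → B} {p : ℕ} (hp : p ≠ 0)
    (hf : ∀ᶠ k in atTop, f (k + p) = f k) : (Set.range f).Finite := by
  obtain ⟨K, hK⟩ := eventually_atTop.1 hf
  refine ((Set.finite_Iio (K + p)).image f).subset ?_
  rintro _ ⟨k, rfl⟩
  induction k using Nat.strong_induction_on with
  | _ k ih =>
    rcases lt_or_ge k (K + p) with hk | hk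
    · exact ⟨k, hk, rfl⟩
    · have hperiod := hK (k - p) (by omega)
      rw [Nat.sub_add_cancel (by omega)] at hperiod
      exact hperiod ▸ ih (k - p) (by omega)

section Monoid

variable {M : Type*} [Monoid M]

theorem pow_mul_pow_mul_eq_self {x u c : M} (h : x * u * c = c) (huc : Commute u c) (j : ℕ) :
    x ^ j * u ^ j * c = c := by
  induction j with
  | zero => simp
  | succ j ih =>
    calc x ^ (j + 1) * u ^ (j + 1) * c
        = x ^ j * (x * u * (u ^ j * c)) := by simp only [pow_succ x, pow_succ' u, mul_assoc]
      _ = x ^ j * (x * u * c * u ^ j) := by rw [(huc.pow_left j).eq, ← mul_assoc (x * u)]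
      _ = c := by rw [h, ← (huc.pow_left j).eq, ← mul_assoc, ih]

theorem pow_mul_pow_mul_pow_mul_pow_of_lt {x β : M} (h : x * β * β = β) {i j : ℕ} (hij : i < j) :
    β ^ i * x ^ i * (β ^ j * x ^ j) = β ^ j * x ^ j := by
  obtain ⟨k, rfl⟩ := Nat.exists_eq_add_of_lt hij
  have hpow : x * β * β ^ (k + 1) = β ^ (k + 1) := by rw [pow_succ', ← mul_assoc, h]
  have hcancel : x ^ i * β ^ (i + k + 1) = β ^ (k + 1) := by
    rw [add_assoc, pow_add, ← mul_assoc, pow_mul_pow_mul_eq_self hpow (Commute.self_pow β _)]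
  rw [mul_assoc, ← mul_assoc (x ^ i), hcancel, ← mul_assoc, ← pow_add, ← add_assoc]

open MulAction DomMulAct in
theorem exists_finite_monoidHom_of_finite_range_mul {B : Type*} (f : M → B)
    (hf : (Set.range fun s x : M => f (s * x)).Finite) :
    ∃ (T : Type) (_ : Monoid T) (_ : Finite T) (φ : M →* T), ∀ s t, φ s = φ t → f s = f t := by
  have horbit : orbit Mᵈᵐᵃ f = Set.range fun s x => f (s * x) :=
    (mk (M := M)).symm.surjective.range_comp fun s x => f (s * x)
  have : Finite (orbit Mᵈᵐᵃ f) := (horbit ▸ hf).to_subtype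
  have : Finite (Function.End (orbit Mᵈᵐᵃ f)) := inferInstanceAs (Finite (_ → _))
  have : Finite (Function.End (orbit Mᵈᵐᵃ f))ᵐᵒᵖ := .of_equiv _ MulOpposite.opEquiv
  let ψ : M →* (Function.End (orbit Mᵈᵐᵃ f))ᵐᵒᵖ :=
    { toFun s := MulOpposite.op (toEndHom (mk s))
      map_one' := by simp
      map_mul' s t := by simp }
  refine ⟨Shrink (Function.End (orbit Mᵈᵐᵃ f))ᵐᵒᵖ, inferInstance, inferInstance,
    Shrink.mulEquiv.symm.toMonoidHom.comp ψ, fun s t hst => ?_⟩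
  have hψ : ψ s = ψ t := Shrink.mulEquiv.symm.injective hst
  have hsmul : mk s • f = mk t • f :=
    congrArg Subtype.val (congrFun (MulOpposite.op_injective hψ) ⟨f, mem_orbit_self f⟩)
  simpa [DomMulAct.smul_apply] using congrFun hsmul 1

end Monoid

/-- A decomposition of a monoid `M` without nontrivial factorizations of `1` into the trivial
submonoid and disjoint blocks `{gen a ^ i | i ≠ 0}`, each free monogenic: `x` is the `deg x`-th
power of the generator of its block. For a semigroup that is a disjoint union of free monogenic
semigroups, `M` is obtained by adjoining an identity. The value `block 1` is arbitrary. -/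
structure MonogenicDecomposition (M A : Type*) [Monoid M] where
  gen : A → M
  block : M → A
  deg : M → ℕ
  gen_block_pow_deg : ∀ x, gen (block x) ^ deg x = x
  block_gen_pow : ∀ a {i}, i ≠ 0 → block (gen a ^ i) = a
  deg_gen_pow : ∀ a i, deg (gen a ^ i) = i
  eq_one_of_mul_eq_one : ∀ {x y : M}, x * y = 1 → x = 1 ∧ y = 1

namespace MonogenicDecomposition

variable {M A : Type*} [Monoid M] (H : MonogenicDecomposition M A)

/-- The same decomposition of the opposite monoid, which turns statements about left
multiplication into statements about right multiplication. -/
def op : MonogenicDecomposition Mᵐᵒᵖ A where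
  gen a := MulOpposite.op (H.gen a)
  block x := H.block x.unop
  deg x := H.deg x.unop
  gen_block_pow_deg x := MulOpposite.unop_injective (H.gen_block_pow_deg x.unop)
  block_gen_pow := H.block_gen_pow
  deg_gen_pow := H.deg_gen_pow
  eq_one_of_mul_eq_one {x y} h := by
    have hunop : y.unop * x.unop = 1 := congrArg MulOpposite.unop h
    simpa only [MulOpposite.unop_eq_one_iff] using (H.eq_one_of_mul_eq_one hunop).symm

theorem gen_pow_eq_one_iff {a : A} {i : ℕ} : H.gen a ^ i = 1 ↔ i = 0 := by
  refine ⟨fun h => ?_, fun h => by rw [h, pow_zero]⟩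
  rw [← H.deg_gen_pow a i, h, ← pow_zero (H.gen a), H.deg_gen_pow]

theorem deg_eq_zero_iff {x : M} : H.deg x = 0 ↔ x = 1 := by
  rw [← H.gen_pow_eq_one_iff (a := H.block x), H.gen_block_pow_deg]

theorem eq_one_of_pow_eq_one (H : MonogenicDecomposition M A) {x : M} {n : ℕ} (hn : n ≠ 0)
    (h : x ^ n = 1) : x = 1 := by
  rw [← mul_pow_sub_one hn] at h
  exact (H.eq_one_of_mul_eq_one h).1

theorem ext_block_deg {x y : M} (hblock : H.block x = H.block y) (hdeg : H.deg x = H.deg y) :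
    x = y := by
  rw [← H.gen_block_pow_deg x, ← H.gen_block_pow_deg y, hblock, hdeg]

theorem mul_gen_block_pow (x : M) (k : ℕ) :
    x * H.gen (H.block x) ^ k = H.gen (H.block x) ^ (H.deg x + k) := by
  rw [pow_add, H.gen_block_pow_deg]

theorem deg_mul_gen_block_pow (x : M) (k : ℕ) :
    H.deg (x * H.gen (H.block x) ^ k) = H.deg x + k := by
  rw [mul_gen_block_pow, H.deg_gen_pow]

theorem block_mul_gen_block_pow (x : M) (k : ℕ) :
    H.block (x * H.gen (H.block x) ^ k) = H.block x := by
  rcases eq_or_ne (H.deg x + k) 0 with h | h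
  · rw [(Nat.add_eq_zero_iff.1 h).2, pow_zero, mul_one]
  · rw [mul_gen_block_pow, H.block_gen_pow _ h]

theorem exists_eq_mul_gen_block_pow {x y : M} (hblock : H.block y = H.block x)
    (hdeg : H.deg x ≤ H.deg y) : ∃ k, y = x * H.gen (H.block x) ^ k := by
  obtain ⟨k, hk⟩ := Nat.exists_eq_add_of_le hdeg
  exact ⟨k, by rw [mul_gen_block_pow, ← hk, ← hblock, H.gen_block_pow_deg]⟩

theorem eq_one_of_mul_eq_right_of_block_eq {x y : M} (hblock : H.block x = H.block y)
    (h : x * y = y) : x = 1 := by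
  have hdeg : H.deg x + H.deg y = H.deg y := by
    conv_rhs => rw [← h, ← H.gen_block_pow_deg y, ← hblock, H.deg_mul_gen_block_pow]
  rwa [Nat.add_eq_right, H.deg_eq_zero_iff] at hdeg

section Finite

variable [Finite A]

theorem eq_one_of_mul_mul_self_eq_self (H : MonogenicDecomposition M A) {x β : M}
    (h : x * β * β = β) : β = 1 := by
  obtain ⟨i, j, hij, -, hblock⟩ :=
    exists_lt_le_card_map_eq fun j => H.block (β ^ (j + 1) * x ^ (j + 1))
  have hone : β ^ (i + 1) * x ^ (i + 1) = 1 :=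
    H.eq_one_of_mul_eq_right_of_block_eq hblock
      (pow_mul_pow_mul_pow_mul_pow_of_lt h (Nat.succ_lt_succ hij))
  exact H.eq_one_of_pow_eq_one i.succ_ne_zero (H.eq_one_of_mul_eq_one hone).1

theorem le_of_mul_gen_pow_eq_gen_pow {x : M} {b : A} {q q' : ℕ}
    (h : x * H.gen b ^ q = H.gen b ^ q') : q ≤ q' := by
  by_contra! hlt
  obtain ⟨D, rfl⟩ := Nat.exists_eq_add_of_le' hlt.le
  have hD : D ≠ 0 := by omega
  have hshift : x ^ q' * (H.gen b ^ D) ^ q' * H.gen b ^ q' = H.gen b ^ q' :=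
    pow_mul_pow_mul_eq_self (by rwa [mul_assoc, ← pow_add]) (Commute.pow_pow_self _ _ _) _
  have hβ : x ^ q' * H.gen b ^ (D * q') * H.gen b ^ (D * q') = H.gen b ^ (D * q') := by
    obtain ⟨e, he⟩ := Nat.exists_eq_add_of_le (Nat.le_mul_of_pos_left q' (Nat.pos_of_ne_zero hD))
    nth_rw 2 3 [he]
    rw [pow_add, ← mul_assoc, pow_mul, hshift]
  have hq' : q' = 0 := by
    simpa [H.gen_pow_eq_one_iff, hD] using H.eq_one_of_mul_mul_self_eq_self hβ
  rw [hq', pow_zero] at h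
  exact hD (by simpa [H.gen_pow_eq_one_iff, hq'] using (H.eq_one_of_mul_eq_one h).2)

theorem exists_semiconjBy_of_block_mul_eq {z y : M} (h : H.block (z * y) = H.block y) :
    ∃ s, SemiconjBy y (H.gen (H.block y) ^ s) z := by
  have hdeg : H.deg y ≤ H.deg (z * y) := by
    apply H.le_of_mul_gen_pow_eq_gen_pow (x := z) (b := H.block y)
    conv_rhs => rw [← h, H.gen_block_pow_deg]
    rw [H.gen_block_pow_deg]
  obtain ⟨s, hs⟩ := H.exists_eq_mul_gen_block_pow h hdeg
  exact ⟨s, hs.symm⟩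

theorem block_pow_mul_eq {z y : M} (h : H.block (z * y) = H.block y) (j : ℕ) :
    H.block (z ^ j * y) = H.block y := by
  obtain ⟨s, hs⟩ := H.exists_semiconjBy_of_block_mul_eq h
  rw [← (hs.pow_right j).eq, ← pow_mul, block_mul_gen_block_pow]

end Finite

/-- `y` is recurrent under left multiplication by `z` if some `z ^ r * y` with `r ≠ 0` lies in the
block of `y`. -/
def LeftRecurrent (z y : M) : Prop :=
  ∃ r ≠ 0, H.block (z ^ r * y) = H.block y

variable {H} in
theorem LeftRecurrent.of_semiconjBy {z y w : M} {r s t : ℕ} (h : SemiconjBy y w (z ^ r))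
    (hr : r ≠ 0) (ht : t ≠ 0) (hblock : H.block (z ^ s * y * w ^ t) = H.block (z ^ s * y)) :
    H.LeftRecurrent z (z ^ s * y) := by
  refine ⟨r * t, mul_ne_zero hr ht, ?_⟩
  rw [← hblock, ← mul_assoc, ← pow_add, add_comm, pow_add, pow_mul, mul_assoc,
    ← (h.pow_right t).eq, mul_assoc]

section Finite

variable [Finite A]

theorem eventually_leftRecurrent (z x : M) : ∀ᶠ l in atTop, H.LeftRecurrent z (z ^ l * x) := by
  have hne {l l' : ℕ} (hl : ¬ H.LeftRecurrent z (z ^ l * x)) (hlt : l < l') :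
      H.block (z ^ l' * x) ≠ H.block (z ^ l * x) := fun heq =>
    hl ⟨l' - l, by omega, by rw [← mul_assoc, ← pow_add, Nat.sub_add_cancel hlt.le, heq]⟩
  have hinj : Set.InjOn (fun l => H.block (z ^ l * x)) {l | ¬ H.LeftRecurrent z (z ^ l * x)} := by
    intro l hl l' hl' heq
    rcases lt_trichotomy l l' with h | h | h
    · exact absurd heq.symm (hne hl h)
    · exact h
    · exact absurd heq (hne hl' h)
  rw [← Nat.cofinite_eq_atTop]
  exact Set.finite_univ.of_injOn (Set.mapsTo_univ _ _) hinj

theorem eventually_exists_block_mul_pow_eq (x z : M) :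
    ∀ᶠ l in atTop, ∃ t ≠ 0, ∀ j, H.block (x * z ^ l * z ^ (t * j)) = H.block (x * z ^ l) := by
  filter_upwards [H.op.eventually_leftRecurrent (.op z) (.op x)] with l ⟨t, ht, hret⟩
  refine ⟨t, ht, fun j => ?_⟩
  rw [pow_mul]
  exact H.op.block_pow_mul_eq hret j

theorem exists_le_card_exists_semiconjBy_pow (z x : M) :
    ∃ i r δ, r ≠ 0 ∧ i + r ≤ Nat.card A ∧
      SemiconjBy (z ^ i * x) (H.gen (H.block (z ^ i * x)) ^ δ) (z ^ r) := by
  obtain ⟨i, j, hij, hj, hblock⟩ := exists_lt_le_card_map_eq fun i => H.block (z ^ i * x)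
  obtain ⟨r, rfl⟩ := Nat.exists_eq_add_of_le' hij.le
  obtain ⟨δ, hδ⟩ := H.exists_semiconjBy_of_block_mul_eq (z := z ^ r) (y := z ^ i * x)
    (by rw [hblock, ← mul_assoc, ← pow_add])
  exact ⟨i, r, δ, by omega, by omega, hδ⟩

theorem eventually_forall_leftRecurrent (z : M) :
    ∀ᶠ k in atTop, ∀ x, H.LeftRecurrent z (z ^ k * x) := by
  set n := Nat.card A
  obtain ⟨L, hL⟩ : ∃ L, ∀ l ≥ L, ∀ (d : A), ∀ s ∈ Finset.range n, ∃ t ≠ 0, ∀ j,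
      H.block (z ^ s * H.gen d ^ l * H.gen d ^ (t * j)) = H.block (z ^ s * H.gen d ^ l) :=
    eventually_atTop.1 <| eventually_all.2 fun d => (eventually_all_finset _).2 fun s _ =>
      H.eventually_exists_block_mul_pow_eq (z ^ s) (H.gen d)
  refine eventually_atTop.2 ⟨n + n * L, fun k hk x => ?_⟩
  obtain ⟨i, r, δ, hr, hir, hδ⟩ := H.exists_le_card_exists_semiconjBy_pow z x
  set y := z ^ i * x
  set d := H.block y
  obtain ⟨s, j, hs, hj, rfl⟩ : ∃ s j, s < r ∧ L ≤ j ∧ k = s + r * j + i := by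
    refine ⟨(k - i) % r, (k - i) / r, Nat.mod_lt _ (Nat.pos_of_ne_zero hr), ?_, ?_⟩
    · rw [Nat.le_div_iff_mul_le (Nat.pos_of_ne_zero hr)]
      have : L * r ≤ n * L := by nlinarith
      omega
    · rw [Nat.mod_add_div]
      omega
  have hwalk : z ^ (s + r * j + i) * x = z ^ s * H.gen d ^ (H.deg y + δ * j) := by
    rw [pow_add, pow_add, mul_assoc, mul_assoc, pow_mul, ← (hδ.pow_right j).eq, ← pow_mul,
      H.mul_gen_block_pow]
  have hsemiconj : SemiconjBy (H.gen d ^ (H.deg y + δ * j)) (H.gen d ^ δ) (z ^ r) := by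
    rw [← H.mul_gen_block_pow]
    exact hδ.mul_left (Commute.pow_pow_self _ _ _)
  rw [hwalk]
  rcases eq_or_ne δ 0 with rfl | hδ0
  · exact .of_semiconjBy hsemiconj hr one_ne_zero (by simp)
  · have hLe : L ≤ H.deg y + δ * j :=
      hj.trans ((Nat.le_mul_of_pos_left j (Nat.pos_of_ne_zero hδ0)).trans (Nat.le_add_left _ _))
    obtain ⟨t, ht, hblock⟩ := hL _ hLe d s (Finset.mem_range.2 (by omega))
    exact .of_semiconjBy hsemiconj hr ht (by rw [← pow_mul, mul_comm δ t]; exact hblock δ)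

theorem exists_pow_semiconjBy_of_block_eq (z : M) (c : A) :
    ∃ n ≠ 0, ∀ y, H.block y = c → H.LeftRecurrent z y →
      ∃ s, SemiconjBy y (H.gen c ^ s) (z ^ n) := by
  classical
  by_cases hex : ∃ e y, H.deg y = e ∧ H.block y = c ∧ H.LeftRecurrent z y
  · obtain ⟨y₀, hdeg, rfl, n, hn, hret⟩ := Nat.find_spec hex
    obtain ⟨s, hs⟩ := H.exists_semiconjBy_of_block_mul_eq hret
    refine ⟨n, hn, fun y hblock hy => ⟨s, ?_⟩⟩
    obtain ⟨k, rfl⟩ := H.exists_eq_mul_gen_block_pow hblock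
      (hdeg ▸ Nat.find_min' hex ⟨y, rfl, hblock, hy⟩)
    exact hs.mul_left (Commute.pow_pow_self _ _ _)
  · exact ⟨1, one_ne_zero, fun y hblock hy => absurd ⟨_, y, rfl, hblock, hy⟩ hex⟩

theorem exists_pow_semiconjBy (z : M) :
    ∃ n ≠ 0, ∀ y, H.LeftRecurrent z y → ∃ s, SemiconjBy y (H.gen (H.block y) ^ s) (z ^ n) := by
  have := Fintype.ofFinite A
  choose n hn hsemiconj using H.exists_pow_semiconjBy_of_block_eq z
  refine ⟨∏ c, n c, Finset.prod_ne_zero_iff.2 fun c _ => hn c, fun y hy => ?_⟩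
  obtain ⟨k, hk⟩ := Finset.dvd_prod_of_mem n (Finset.mem_univ (H.block y))
  obtain ⟨s, hs⟩ := hsemiconj _ y rfl hy
  refine ⟨s * k, ?_⟩
  rw [hk, pow_mul, pow_mul]
  exact hs.pow_right k

end Finite

/-- The block of `x` together with its exponent modulo `N`: a finite invariant that separates the
elements of degree less than `N`. -/
def label (N : ℕ) (x : M) : A × ZMod N :=
  (H.block x, H.deg x)

theorem eq_of_label_eq {N : ℕ} {x y : M} (hx : H.deg x < N) (hy : H.deg y < N)
    (h : H.label N x = H.label N y) : x = y := by
  obtain ⟨hblock, hdeg⟩ := Prod.mk.inj h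
  rw [ZMod.natCast_eq_natCast_iff] at hdeg
  exact H.ext_block_deg hblock (hdeg.eq_of_lt_of_lt hx hy)

theorem label_mul_gen_block_pow (N : ℕ) (x : M) (k : ℕ) :
    H.label N (x * H.gen (H.block x) ^ (k * N)) = H.label N x := by
  simp [label, block_mul_gen_block_pow, deg_mul_gen_block_pow]

section Finite

variable [Finite A] (N : ℕ) [NeZero N]

theorem finite_range_label_pow_mul (z : M) :
    (Set.range fun (k : ℕ) x => H.label N (z ^ k * x)).Finite := by
  obtain ⟨n, hn, hsemiconj⟩ := H.exists_pow_semiconjBy z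
  refine finite_range_of_eventually_periodic (mul_ne_zero hn (NeZero.ne N)) ?_
  filter_upwards [H.eventually_forall_leftRecurrent z] with k hk
  funext x
  obtain ⟨s, hs⟩ := hsemiconj _ (hk x)
  rw [add_comm, pow_add, mul_assoc, pow_mul, ← (hs.pow_right N).eq, ← pow_mul,
    label_mul_gen_block_pow]

theorem finite_range_label_mul : (Set.range fun s x => H.label N (s * x)).Finite := by
  refine (Set.finite_iUnion fun a => H.finite_range_label_pow_mul N (H.gen a)).subset ?_
  rintro _ ⟨s, rfl⟩
  exact Set.mem_iUnion.2 ⟨H.block s, H.deg s, by simp only [H.gen_block_pow_deg]⟩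

end Finite

theorem exists_finite_monoidHom_ne [Finite A] (H : MonogenicDecomposition M A) {s t : M}
    (hst : s ≠ t) :
    ∃ (T : Type) (_ : Monoid T) (_ : Finite T) (φ : M →* T), φ s ≠ φ t := by
  let N := H.deg s + H.deg t + 1
  obtain ⟨T, iT, hT, φ, hφ⟩ :=
    exists_finite_monoidHom_of_finite_range_mul (H.label N) (H.finite_range_label_mul N)
  exact ⟨T, iT, hT, φ, fun h => hst (H.eq_of_label_eq (by omega) (by omega) (hφ s t h))⟩

end MonogenicDecomposition

section Semigroup

variable {S : Type*} [Semigroup S]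

theorem coe_spow (a : S) {i : ℕ} (hi : i ≠ 0) :
    ((spow a i : S) : WithOne S) = (a : WithOne S) ^ i := by
  induction i, Nat.one_le_iff_ne_zero.2 hi using Nat.le_induction with
  | base => rw [pow_one, spow]
  | succ i hpos ih =>
    obtain ⟨i, rfl⟩ := Nat.exists_eq_add_of_le' hpos
    rw [pow_succ, ← ih i.succ_ne_zero, ← WithOne.coe_mul, spow]

theorem withOne_eq_one_of_mul_eq_one {x y : WithOne S} (h : x * y = 1) : x = 1 ∧ y = 1 := by
  induction x using WithOne.recOneCoe with
  | one => exact ⟨rfl, by rwa [one_mul] at h⟩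
  | coe x =>
    induction y using WithOne.recOneCoe with
    | one => exact ⟨by rwa [mul_one] at h, rfl⟩
    | coe y => exact absurd h WithOne.coe_ne_one

theorem nonempty_monogenicDecomposition_withOne {A : Type*} [Nonempty A] (gen : A → S)
    (hcover : ∀ x : S, ∃ a : A, x ∈ Nblock (gen a))
    (hfree : ∀ (a b : A) (i j : ℕ), 1 ≤ i → 1 ≤ j →
      spow (gen a) i = spow (gen b) j → a = b ∧ i = j) :
    Nonempty (MonogenicDecomposition (WithOne S) A) := by
  choose block hblock using hcover
  choose deg hdeg hspow using hblock
  have hunique (a : A) {i : ℕ} (hi : i ≠ 0) :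
      block (spow (gen a) i) = a ∧ deg (spow (gen a) i) = i :=
    hfree _ _ _ _ (hdeg _) (Nat.one_le_iff_ne_zero.2 hi) (hspow _).symm
  exact ⟨{
    gen a := gen a
    block := WithOne.recOneCoe (Classical.arbitrary A) block
    deg := WithOne.recOneCoe 0 deg
    gen_block_pow_deg := WithOne.forall.2 ⟨pow_zero _, fun x => by
      simp only [WithOne.recOneCoe_coe]
      rw [← coe_spow _ (Nat.one_le_iff_ne_zero.1 (hdeg x)), ← hspow]⟩
    block_gen_pow a i hi := by
      rw [← coe_spow _ hi]
      exact (hunique a hi).1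
    deg_gen_pow a i := by
      rcases eq_or_ne i 0 with rfl | hi
      · rw [pow_zero, WithOne.recOneCoe_one]
      · rw [← coe_spow _ hi]
        exact (hunique a hi).2
    eq_one_of_mul_eq_one := withOne_eq_one_of_mul_eq_one }⟩

end Semigroup

theorem stmt11 {S : Type*} [Semigroup S] {A : Type*} [Finite A] (gen : A → S)
    (hcover : ∀ x : S, ∃ a : A, x ∈ Nblock (gen a))
    (hfree : ∀ (a b : A) (i j : ℕ), 1 ≤ i → 1 ≤ j →
      spow (gen a) i = spow (gen b) j → a = b ∧ i = j) :
    ResiduallyFiniteSemigroup S := by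
  intro s t hst
  have : Nonempty A := (hcover s).nonempty
  obtain ⟨H⟩ := nonempty_monogenicDecomposition_withOne gen hcover hfree
  obtain ⟨T, _, hT, φ, hφ⟩ := H.exists_finite_monoidHom_ne (WithOne.coe_injective.ne hst)
  exact ⟨T, inferInstance, hT, φ.toMulHom.comp WithOne.coeMulHom, hφ⟩
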